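/- Let p > 1 and let μ, ν be probability measures on ℝ with finite p-th moments and distribution functions F and G. Among all couplings π of μ and ν, the integral ∫_{ℝ×ℝ} |y−x|^p dπ(x,y) is minimized by the coupling whose joint distribution function is H(x,y) = min{F(x), G(y)}; in particular W_p(μ,ν)^p = ∫_{ℝ×ℝ} |y−x|^p dπ_M(x,y), where π_M is the unique probability measure on ℝ×ℝ with joint distribution function min{F(x), G(y)}. -/

import Mathlib

/-!
The integral of `(y - x - s)₊` against `π` equals `∫ π (Iic (r - s) ×ˢ Ioi r) dr`, because
`(y - x - s)₊` is the length of `{r | x + s ≤ r < y}`. For a coupling `π` of `μ` and `ν` the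
integrand is `F (r - s) - π (Iic (r - s) ×ˢ Iic r)`, so the integral can only decrease when the
joint distribution function of `π` increases. Exchanging the coordinates gives the same for
`(x - y - s)₊`.

A convex function that attains its minimum is a constant plus a superposition of the hinges
`(t - u)₊` and `(-t - u)₊`, so for every nonnegative convex cost that attains its minimum, a larger
joint distribution function means a smaller transport cost. Truncating the cost slightly above its
infimum removes the attainment hypothesis. Since `min (F x) (G y)` is the largest joint distribution
function of a coupling (Fréchet–Hoeffding), it is optimal. It is indeed the joint distribution
function of a coupling, namely of the joint law of the quantile functions under the uniform
distribution on `(0, 1)`, because `quantile μ u ≤ x ↔ u ≤ F x`.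
-/

open MeasureTheory ENNReal Set

/-- `π` is a coupling of `μ` and `ν`. -/
def IsCoupling {α : Type*} [MeasurableSpace α] (π : MeasureTheory.Measure (α × α))
    (μ ν : MeasureTheory.Measure α) : Prop :=
  π.map Prod.fst = μ ∧ π.map Prod.snd = ν

/-- The `p`-th power of the `p`-Wasserstein distance on `ℝ`. -/
noncomputable def WpPow (p : ℝ) (μ ν : MeasureTheory.Measure ℝ) : ℝ≥0∞ :=
  ⨅ π ∈ {π : MeasureTheory.Measure (ℝ × ℝ) | IsCoupling π μ ν},
    ∫⁻ z, ENNReal.ofReal (|z.1 - z.2| ^ p) ∂π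

open Filter ProbabilityTheory Topology

/-! ### Convex functions as superpositions of hinges -/

/-- Here `κ` is the Stieltjes measure of `f`, and the identity is Tonelli over `u ≤ s < t`. -/
lemma exists_lintegral_Iio_eq_lintegral_hinge {f : ℝ → ℝ} (hf : Monotone f)
    (h₀ : Tendsto f atBot (𝓝 0)) :
    ∃ κ : Measure ℝ, SFinite κ ∧ ∀ t,
      ∫⁻ s in Iio t, ENNReal.ofReal (f s) = ∫⁻ u, ENNReal.ofReal (t - u) ∂κ := by
  set κ := hf.stieltjesFunction.measure
  have hκ : ∀ᵐ s, ENNReal.ofReal (f s) = κ (Iic s) := by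
    filter_upwards [hf.countable_not_continuousAt.ae_notMem volume] with s hs
    have hcont : ContinuousAt f s := not_not.1 hs
    rw [hf.stieltjesFunction.measure_Iic (tendsto_rightLim_atBot_of_tendsto h₀),
      hf.stieltjesFunction_eq, hcont.continuousWithinAt.rightLim_eq, sub_zero]
  refine ⟨κ, inferInstance, fun t => ?_⟩
  have hmeas : MeasurableSet {q : ℝ × ℝ | q.1 < t ∧ q.2 ≤ q.1} := by measurability
  calc ∫⁻ s in Iio t, ENNReal.ofReal (f s)
      = ∫⁻ s, κ (Prod.mk s ⁻¹' {q : ℝ × ℝ | q.1 < t ∧ q.2 ≤ q.1}) := by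
        rw [setLIntegral_congr_fun_ae measurableSet_Iio (hκ.mono fun s hs _ => hs),
          ← lintegral_indicator measurableSet_Iio]
        congr with s
        by_cases hs : s < t <;> simp [hs, Iic_def]
    _ = ∫⁻ u, volume ((fun s => (s, u)) ⁻¹' {q : ℝ × ℝ | q.1 < t ∧ q.2 ≤ q.1}) ∂κ := by
        rw [← Measure.prod_apply hmeas, Measure.prod_apply_symm hmeas]
    _ = ∫⁻ u, ENNReal.ofReal (t - u) ∂κ := by
        congr with u
        rw [← Real.volume_Ico]
        congr with s
        simp [and_comm]

section Convex

variable {φ : ℝ → ℝ} {m : ℝ}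

lemma monotone_rightDeriv_of_convexOn (hφ : ConvexOn ℝ univ φ) :
    Monotone fun s => derivWithin φ (Ioi s) s := by
  simpa [monotoneOn_univ] using hφ.monotoneOn_rightDeriv

lemma integral_rightDeriv_of_convexOn (hφ : ConvexOn ℝ univ φ) (a b : ℝ) :
    ∫ s in a..b, derivWithin φ (Ioi s) s = φ b - φ a :=
  intervalIntegral.integral_eq_sub_of_hasDeriv_right
    ((hφ.continuousOn isOpen_univ).mono (subset_univ _))
    (fun _ _ => hφ.hasDerivWithinAt_rightDeriv_of_mem_interior (by simp))
    (monotone_rightDeriv_of_convexOn hφ).intervalIntegrable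

lemma rightDeriv_nonneg_of_isMinOn (hφ : ConvexOn ℝ univ φ) (hm : IsMinOn φ univ m) {s : ℝ}
    (hs : m ≤ s) : 0 ≤ derivWithin φ (Ioi s) s := by
  suffices 0 ≤ derivWithin φ (Ioi m) m from this.trans (monotone_rightDeriv_of_convexOn hφ hs)
  rw [hφ.rightDeriv_eq_sInf_slope_of_mem_interior (by simp)]
  refine Real.sInf_nonneg ?_
  rintro _ ⟨y, ⟨-, hy⟩, rfl⟩
  rw [slope_def_field]
  exact div_nonneg (sub_nonneg.2 (hm (mem_univ y))) (sub_nonneg.2 hy.le)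

lemma rightDeriv_nonpos_of_isMinOn (hφ : ConvexOn ℝ univ φ) (hm : IsMinOn φ univ m) {s : ℝ}
    (hs : s < m) : derivWithin φ (Ioi s) s ≤ 0 := by
  refine (hφ.rightDeriv_le_slope_of_mem_interior (by simp) (mem_univ m) hs).trans ?_
  rw [slope_def_field]
  exact div_nonpos_of_nonpos_of_nonneg (sub_nonpos.2 (hm (mem_univ s))) (sub_nonneg.2 hs.le)

lemma lintegral_Iio_rightDeriv_of_isMinOn (hφ : ConvexOn ℝ univ φ) (hm : IsMinOn φ univ m)
    (t : ℝ) :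
    ∫⁻ s in Iio t, ENNReal.ofReal (derivWithin φ (Ioi s) s) =
      ENNReal.ofReal (φ (max t m) - φ m) := by
  have hzero (a : ℝ) (ha : a ≤ m) :
      ∫⁻ s in Iio a, ENNReal.ofReal (derivWithin φ (Ioi s) s) = 0 :=
    setLIntegral_eq_zero measurableSet_Iio fun s hs =>
      ENNReal.ofReal_of_nonpos (rightDeriv_nonpos_of_isMinOn hφ hm (lt_of_lt_of_le hs ha))
  rcases le_total t m with htm | hmt
  · rw [hzero t htm, max_eq_right htm, sub_self, ENNReal.ofReal_zero]
  · have hint := (monotone_rightDeriv_of_convexOn hφ).intervalIntegrable (μ := volume)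
      (a := m) (b := t)
    have hdisj : Disjoint (Iio m) (Ico m t) :=
      disjoint_left.2 fun _ hs hs' => not_lt_of_ge hs'.1 hs
    rw [← Iio_union_Ico_eq_Iio hmt, lintegral_union measurableSet_Ico hdisj, hzero m le_rfl,
      zero_add, max_eq_left hmt, ← integral_rightDeriv_of_convexOn hφ,
      intervalIntegral.integral_of_le hmt, ← restrict_Ico_eq_restrict_Ioc,
      ofReal_integral_eq_lintegral_ofReal]
    · exact (intervalIntegrable_iff_integrableOn_Ico_of_le hmt).1 hint
    · exact ae_restrict_of_forall_mem measurableSet_Ico fun s hs =>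
        rightDeriv_nonneg_of_isMinOn hφ hm hs.1

lemma exists_ofReal_max_sub_eq_lintegral_hinge (hφ : ConvexOn ℝ univ φ)
    (hm : IsMinOn φ univ m) :
    ∃ κ : Measure ℝ, SFinite κ ∧ ∀ t,
      ENNReal.ofReal (φ (max t m) - φ m) = ∫⁻ u, ENNReal.ofReal (t - u) ∂κ := by
  have hmono : Monotone fun s => max (derivWithin φ (Ioi s) s) 0 :=
    (monotone_rightDeriv_of_convexOn hφ).max monotone_const
  have htendsto : Tendsto (fun s => max (derivWithin φ (Ioi s) s) 0) atBot (𝓝 0) :=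
    tendsto_const_nhds.congr' <| (eventually_lt_atBot m).mono fun s hs =>
      (max_eq_right (rightDeriv_nonpos_of_isMinOn hφ hm hs)).symm
  obtain ⟨κ, hκ, h⟩ := exists_lintegral_Iio_eq_lintegral_hinge hmono htendsto
  refine ⟨κ, hκ, fun t => ?_⟩
  simp only [← h, ← lintegral_Iio_rightDeriv_of_isMinOn hφ hm, ENNReal.ofReal_max,
    ENNReal.ofReal_zero, max_zero]

lemma exists_ofReal_sub_eq_lintegral_hinge_add (hφ : ConvexOn ℝ univ φ)
    (hm : IsMinOn φ univ m) :
    ∃ κ₁ κ₂ : Measure ℝ, SFinite κ₁ ∧ SFinite κ₂ ∧ ∀ t, ENNReal.ofReal (φ t - φ m) =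
      ∫⁻ u, ENNReal.ofReal (t - u) ∂κ₁ + ∫⁻ u, ENNReal.ofReal (-t - u) ∂κ₂ := by
  have hneg : ConvexOn ℝ univ fun t => φ (-t) := hφ.comp_linearMap (-LinearMap.id)
  have hminneg : IsMinOn (fun t => φ (-t)) univ (-m) := fun t _ => by
    simpa using hm (mem_univ (-t))
  obtain ⟨κ₁, hκ₁, h₁⟩ := exists_ofReal_max_sub_eq_lintegral_hinge hφ hm
  obtain ⟨κ₂, hκ₂, h₂⟩ := exists_ofReal_max_sub_eq_lintegral_hinge hneg hminneg
  refine ⟨κ₁, κ₂, hκ₁, hκ₂, fun t => ?_⟩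
  rw [← h₁, ← h₂]
  rcases le_total t m with h | h
  · simp [h]
  · simp [h]

end Convex

lemma exists_isMinOn_max_const {α : Type*} [Nonempty α] {φ : α → ℝ} (hbdd : BddBelow (range φ))
    {ε : ℝ} (hε : 0 < ε) :
    ∃ m, IsMinOn (fun t => max (φ t) (φ m)) univ m ∧ ∀ t, max (φ t) (φ m) ≤ φ t + ε := by
  obtain ⟨m, hm⟩ := exists_lt_of_ciInf_lt (lt_add_of_pos_right (⨅ t, φ t) hε)
  refine ⟨m, fun t _ => by simp, fun t => ?_⟩
  have := ciInf_le hbdd t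
  exact max_le (by linarith) (by linarith)

lemma convexOn_abs_rpow {p : ℝ} (hp : 1 ≤ p) : ConvexOn ℝ univ fun t : ℝ => |t| ^ p := by
  have himage : (fun t : ℝ => |t|) '' univ = Ici 0 :=
    Subset.antisymm (image_subset_iff.2 fun t _ => abs_nonneg t)
      fun t ht => ⟨t, mem_univ t, abs_of_nonneg ht⟩
  have habs : ConvexOn ℝ univ fun t : ℝ => |t| := convexOn_norm convex_univ
  exact ConvexOn.comp (himage ▸ convexOn_rpow hp) habs
    (himage ▸ Real.monotoneOn_rpow_Ici_of_exponent_nonneg (by linarith))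

/-! ### Comparison of couplings -/

section Coupling

variable {α : Type*} [MeasurableSpace α] {π : Measure (α × α)} {μ ν : Measure α}

lemma IsCoupling.swap (h : IsCoupling π μ ν) : IsCoupling (π.map Prod.swap) ν μ :=
  ⟨by rw [Measure.map_map measurable_fst measurable_swap]; exact h.2,
    by rw [Measure.map_map measurable_snd measurable_swap]; exact h.1⟩

lemma IsCoupling.measure_prod_univ (h : IsCoupling π μ ν) {s : Set α} (hs : MeasurableSet s) :
    π (s ×ˢ univ) = μ s := by
  rw [← h.1, Measure.map_apply measurable_fst hs, prod_univ]

lemma IsCoupling.measure_univ_prod (h : IsCoupling π μ ν) {t : Set α} (ht : MeasurableSet t) :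
    π (univ ×ˢ t) = ν t := by
  rw [← h.2, Measure.map_apply measurable_snd ht, univ_prod]

lemma IsCoupling.measure_univ_eq (h : IsCoupling π μ ν) : π univ = μ univ := by
  rw [← univ_prod_univ, h.measure_prod_univ MeasurableSet.univ]

lemma IsCoupling.isFiniteMeasure [IsFiniteMeasure μ] (h : IsCoupling π μ ν) :
    IsFiniteMeasure π :=
  ⟨h.measure_univ_eq ▸ measure_lt_top μ univ⟩

lemma IsCoupling.isProbabilityMeasure [IsProbabilityMeasure μ] (h : IsCoupling π μ ν) :
    IsProbabilityMeasure π :=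
  ⟨h.measure_univ_eq.trans measure_univ⟩

/-- The upper Fréchet–Hoeffding bound. -/
lemma IsCoupling.measure_prod_le_min (h : IsCoupling π μ ν) {s t : Set α}
    (hs : MeasurableSet s) (ht : MeasurableSet t) : π (s ×ˢ t) ≤ min (μ s) (ν t) := by
  rw [← h.measure_prod_univ hs, ← h.measure_univ_prod ht]
  exact le_min (measure_mono (prod_mono_right (subset_univ _)))
    (measure_mono (prod_mono_left (subset_univ _)))

lemma IsCoupling.measure_prod_compl [IsFiniteMeasure π] (h : IsCoupling π μ ν) {s t : Set α}
    (hs : MeasurableSet s) (ht : MeasurableSet t) : π (s ×ˢ tᶜ) = μ s - π (s ×ˢ t) := by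
  rw [← h.measure_prod_univ hs, ← measure_sdiff (prod_mono_right (subset_univ _))
    (hs.prod ht).nullMeasurableSet (measure_ne_top _ _), prod_sdiff_prod]
  simp [compl_eq_univ_sdiff]

end Coupling

lemma lintegral_ofReal_sub_sub (π : Measure (ℝ × ℝ)) [SFinite π] (s : ℝ) :
    ∫⁻ z, ENNReal.ofReal (z.2 - z.1 - s) ∂π = ∫⁻ r, π (Iic (r - s) ×ˢ Ioi r) := by
  have hmeas : MeasurableSet {q : (ℝ × ℝ) × ℝ | q.1.1 ≤ q.2 - s ∧ q.2 < q.1.2} := by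
    measurability
  calc ∫⁻ z, ENNReal.ofReal (z.2 - z.1 - s) ∂π
      = ∫⁻ z, volume (Prod.mk z ⁻¹' {q : (ℝ × ℝ) × ℝ | q.1.1 ≤ q.2 - s ∧ q.2 < q.1.2}) ∂π := by
        congr with z
        rw [sub_sub, ← Real.volume_Ico]
        congr with r
        simp [le_sub_iff_add_le]
    _ = ∫⁻ r, π (Iic (r - s) ×ˢ Ioi r) := by
        rw [← Measure.prod_apply hmeas, Measure.prod_apply_symm hmeas]
        rfl

lemma measurable_lintegral_hinge (κ : Measure ℝ) [SFinite κ] :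
    Measurable fun z : ℝ × ℝ => ∫⁻ u, ENNReal.ofReal (z.2 - z.1 - u) ∂κ :=
  Measurable.lintegral_prod_right' (f := fun q : (ℝ × ℝ) × ℝ =>
    ENNReal.ofReal (q.1.2 - q.1.1 - q.2)) (by fun_prop)

section Comparison

variable {π₁ π₂ : Measure (ℝ × ℝ)} {μ ν : Measure ℝ} [IsFiniteMeasure μ]

lemma IsCoupling.lintegral_hinge_le (h₁ : IsCoupling π₁ μ ν) (h₂ : IsCoupling π₂ μ ν)
    (hle : ∀ x y, π₂ (Iic x ×ˢ Iic y) ≤ π₁ (Iic x ×ˢ Iic y)) (s : ℝ) :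
    ∫⁻ z, ENNReal.ofReal (z.2 - z.1 - s) ∂π₁ ≤ ∫⁻ z, ENNReal.ofReal (z.2 - z.1 - s) ∂π₂ := by
  have := h₁.isFiniteMeasure
  have := h₂.isFiniteMeasure
  simp_rw [lintegral_ofReal_sub_sub, ← compl_Iic,
    h₁.measure_prod_compl measurableSet_Iic measurableSet_Iic,
    h₂.measure_prod_compl measurableSet_Iic measurableSet_Iic]
  exact lintegral_mono fun r => tsub_le_tsub_left (hle _ _) _

lemma IsCoupling.lintegral_lintegral_hinge_le (h₁ : IsCoupling π₁ μ ν) (h₂ : IsCoupling π₂ μ ν)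
    (hle : ∀ x y, π₂ (Iic x ×ˢ Iic y) ≤ π₁ (Iic x ×ˢ Iic y)) (κ : Measure ℝ) [SFinite κ] :
    ∫⁻ z, ∫⁻ u, ENNReal.ofReal (z.2 - z.1 - u) ∂κ ∂π₁ ≤
      ∫⁻ z, ∫⁻ u, ENNReal.ofReal (z.2 - z.1 - u) ∂κ ∂π₂ := by
  have := h₁.isFiniteMeasure
  have := h₂.isFiniteMeasure
  have hmeas : Measurable (Function.uncurry fun (z : ℝ × ℝ) u =>
      ENNReal.ofReal (z.2 - z.1 - u)) := by
    simp only [Function.uncurry_def]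
    fun_prop
  rw [lintegral_lintegral_swap hmeas.aemeasurable, lintegral_lintegral_swap hmeas.aemeasurable]
  exact lintegral_mono (h₁.lintegral_hinge_le h₂ hle)

lemma IsCoupling.lintegral_lintegral_hinge_neg_le (h₁ : IsCoupling π₁ μ ν)
    (h₂ : IsCoupling π₂ μ ν) (hle : ∀ x y, π₂ (Iic x ×ˢ Iic y) ≤ π₁ (Iic x ×ˢ Iic y))
    (κ : Measure ℝ) [SFinite κ] :
    ∫⁻ z, ∫⁻ u, ENNReal.ofReal (-(z.2 - z.1) - u) ∂κ ∂π₁ ≤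
      ∫⁻ z, ∫⁻ u, ENNReal.ofReal (-(z.2 - z.1) - u) ∂κ ∂π₂ := by
  have := h₁.isFiniteMeasure
  have : IsFiniteMeasure ν := h₁.2 ▸ inferInstance
  have hswap (x y : ℝ) :
      π₂.map Prod.swap (Iic x ×ˢ Iic y) ≤ π₁.map Prod.swap (Iic x ×ˢ Iic y) := by
    have hquadrant := (measurableSet_Iic (a := x)).prod (measurableSet_Iic (a := y))
    rw [Measure.map_apply measurable_swap hquadrant, Measure.map_apply measurable_swap hquadrant,
      preimage_swap_prod]
    exact hle y x
  have := h₁.swap.lintegral_lintegral_hinge_le h₂.swap hswap κ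
  simp_rw [neg_sub]
  rwa [lintegral_map (measurable_lintegral_hinge κ) measurable_swap,
    lintegral_map (measurable_lintegral_hinge κ) measurable_swap] at this

variable {φ : ℝ → ℝ}

lemma IsCoupling.lintegral_convexOn_le_of_isMinOn (h₁ : IsCoupling π₁ μ ν)
    (h₂ : IsCoupling π₂ μ ν) (hle : ∀ x y, π₂ (Iic x ×ˢ Iic y) ≤ π₁ (Iic x ×ˢ Iic y))
    (hφ : ConvexOn ℝ univ φ) {m : ℝ} (hm : IsMinOn φ univ m) (hm₀ : 0 ≤ φ m) :
    ∫⁻ z, ENNReal.ofReal (φ (z.2 - z.1)) ∂π₁ ≤ ∫⁻ z, ENNReal.ofReal (φ (z.2 - z.1)) ∂π₂ := by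
  obtain ⟨κ₁, κ₂, _, _, h⟩ := exists_ofReal_sub_eq_lintegral_hinge_add hφ hm
  have hdecomp (t : ℝ) : ENNReal.ofReal (φ t) = ENNReal.ofReal (φ m) +
      (∫⁻ u, ENNReal.ofReal (t - u) ∂κ₁ + ∫⁻ u, ENNReal.ofReal (-t - u) ∂κ₂) := by
    rw [← h, ← ENNReal.ofReal_add hm₀ (sub_nonneg.2 (hm (mem_univ t))), add_sub_cancel]
  simp only [hdecomp (_ - _), lintegral_add_left measurable_const,
    lintegral_add_left (measurable_lintegral_hinge κ₁), lintegral_const, h₁.measure_univ_eq,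
    h₂.measure_univ_eq]
  exact add_le_add_right (add_le_add (h₁.lintegral_lintegral_hinge_le h₂ hle κ₁)
    (h₁.lintegral_lintegral_hinge_neg_le h₂ hle κ₂)) _

lemma IsCoupling.lintegral_convexOn_le (h₁ : IsCoupling π₁ μ ν) (h₂ : IsCoupling π₂ μ ν)
    (hle : ∀ x y, π₂ (Iic x ×ˢ Iic y) ≤ π₁ (Iic x ×ˢ Iic y))
    (hφ : ConvexOn ℝ univ φ) (hφ₀ : ∀ t, 0 ≤ φ t) :
    ∫⁻ z, ENNReal.ofReal (φ (z.2 - z.1)) ∂π₁ ≤ ∫⁻ z, ENNReal.ofReal (φ (z.2 - z.1)) ∂π₂ := by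
  refine ENNReal.le_of_forall_pos_le_add fun ε hε _ => ?_
  obtain ⟨δ, hδ, hδε⟩ := ENNReal.exists_nnreal_pos_mul_lt (measure_ne_top μ univ)
    (ENNReal.coe_ne_zero.2 hε.ne')
  obtain ⟨m, hm, hmδ⟩ := exists_isMinOn_max_const ⟨0, forall_mem_range.2 hφ₀⟩ hδ
  calc ∫⁻ z, ENNReal.ofReal (φ (z.2 - z.1)) ∂π₁
      ≤ ∫⁻ z, ENNReal.ofReal (max (φ (z.2 - z.1)) (φ m)) ∂π₁ :=
        lintegral_mono fun z => ENNReal.ofReal_le_ofReal (le_max_left _ _)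
    _ ≤ ∫⁻ z, ENNReal.ofReal (max (φ (z.2 - z.1)) (φ m)) ∂π₂ :=
        h₁.lintegral_convexOn_le_of_isMinOn h₂ hle (hφ.sup (convexOn_const _ convex_univ)) hm
          (le_max_of_le_left (hφ₀ m))
    _ ≤ ∫⁻ z, (ENNReal.ofReal (φ (z.2 - z.1)) + δ) ∂π₂ := lintegral_mono fun z => by
        rw [← ENNReal.ofReal_coe_nnreal, ← ENNReal.ofReal_add (hφ₀ _) δ.coe_nonneg]
        exact ENNReal.ofReal_le_ofReal (hmδ _)
    _ = ∫⁻ z, ENNReal.ofReal (φ (z.2 - z.1)) ∂π₂ + δ * μ univ := by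
        rw [lintegral_add_right _ measurable_const, lintegral_const, h₂.measure_univ_eq]
    _ ≤ ∫⁻ z, ENNReal.ofReal (φ (z.2 - z.1)) ∂π₂ + ε := by gcongr

end Comparison

/-! ### The comonotone coupling -/

lemma ext_of_Iic_prod_Iic {π₁ π₂ : Measure (ℝ × ℝ)} [IsFiniteMeasure π₁]
    (h : ∀ x y : ℝ, π₁ (Iic x ×ˢ Iic y) = π₂ (Iic x ×ˢ Iic y)) : π₁ = π₂ := by
  have hspan : IsCountablySpanning (range (Iic : ℝ → Set ℝ)) :=
    ⟨fun n : ℕ => Iic (n : ℝ), fun n => mem_range_self _, iUnion_eq_univ_iff.2 exists_nat_ge⟩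
  have hgen : (inferInstance : MeasurableSpace ℝ) = MeasurableSpace.generateFrom (range Iic) :=
    (BorelSpace.measurable_eq (α := ℝ)).trans (borel_eq_generateFrom_Iic ℝ)
  refine Measure.ext_of_generateFrom_of_iUnion (image2 (· ×ˢ ·) (range Iic) (range Iic))
    (fun n : ℕ => Iic (n : ℝ) ×ˢ Iic (n : ℝ)) ?_ (isPiSystem_Iic.prod isPiSystem_Iic) ?_ ?_
    (fun n => measure_ne_top _ _) ?_
  · rw [← generateFrom_prod_eq hspan hspan, ← hgen]
  · refine iUnion_eq_univ_iff.2 fun z => ?_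
    obtain ⟨n, hn⟩ := exists_nat_ge (max z.1 z.2)
    exact ⟨n, max_le_iff.1 hn⟩
  · exact fun n => mem_image2_of_mem (mem_range_self _) (mem_range_self _)
  · rintro _ ⟨_, ⟨x, rfl⟩, _, ⟨y, rfl⟩, rfl⟩
    exact h x y

/-- The quantile function (generalized inverse of the distribution function) of `μ`, whose law
under the uniform distribution on `(0, 1)` is `μ`. Only its values on `(0, 1)` are meaningful. -/
noncomputable def quantile (μ : Measure ℝ) (u : ℝ) : ℝ :=
  sInf {x | u ≤ cdf μ x}

lemma quantile_le_iff (μ : Measure ℝ) {u : ℝ} (hu : u ∈ Ioo 0 1) (x : ℝ) :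
    quantile μ u ≤ x ↔ u ≤ cdf μ x := by
  have hbdd : BddBelow {x | u ≤ cdf μ x} := by
    obtain ⟨b, hb⟩ := ((tendsto_cdf_atBot μ).eventually_lt_const hu.1).exists
    exact ⟨b, fun y hy => ((monotone_cdf μ).reflect_lt (hb.trans_le hy)).le⟩
  have hne : {x | u ≤ cdf μ x}.Nonempty :=
    ((tendsto_cdf_atTop μ).eventually_const_le hu.2).exists
  refine ⟨fun h => ?_, fun h => csInf_le hbdd h⟩
  -- Right continuity: the distribution function at `x` is the infimum of its values beyond `x`.
  rw [← (cdf μ).iInf_Ioi_eq x]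
  refine le_ciInf fun r => ?_
  obtain ⟨y, hy, hyr⟩ := exists_lt_of_csInf_lt hne (h.trans_lt r.2)
  exact le_trans hy (monotone_cdf μ hyr.le)

lemma monotoneOn_quantile (μ : Measure ℝ) : MonotoneOn (quantile μ) (Ioo 0 1) :=
  fun _ hu _ hv huv => (quantile_le_iff μ hu _).2 (huv.trans ((quantile_le_iff μ hv _).1 le_rfl))

lemma aemeasurable_quantile (μ : Measure ℝ) :
    AEMeasurable (quantile μ) (volume.restrict (Ioo 0 1)) :=
  aemeasurable_restrict_of_monotoneOn measurableSet_Ioo (monotoneOn_quantile μ)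

lemma volume_restrict_Ioo_Iic {a b c : ℝ} (hc : c ≤ b) :
    volume.restrict (Ioo a b) (Iic c) = ENNReal.ofReal (c - a) := by
  rw [restrict_Ioo_eq_restrict_Ioc, Measure.restrict_apply measurableSet_Iic, inter_comm,
    Ioc_inter_Iic, inf_eq_right.2 hc, Real.volume_Ioc]

section Comonotone

variable (μ ν : Measure ℝ)

/-- The comonotone coupling of `μ` and `ν`, i.e. the measure `π_M` of the theorem, realized as the
joint law of the quantile functions of `μ` and `ν` under the uniform distribution on `(0, 1)`. -/
noncomputable def comonotoneCoupling : Measure (ℝ × ℝ) :=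
  (volume.restrict (Ioo 0 1)).map fun u => (quantile μ u, quantile ν u)

variable [IsProbabilityMeasure μ]

lemma map_quantile : (volume.restrict (Ioo 0 1)).map (quantile μ) = μ := by
  refine Measure.ext_of_Iic _ _ fun x => ?_
  have hpreimage : quantile μ ⁻¹' Iic x =ᵐ[volume.restrict (Ioo 0 1)] Iic (cdf μ x) :=
    ae_restrict_of_forall_mem measurableSet_Ioo fun u hu => propext (quantile_le_iff μ hu x)
  rw [Measure.map_apply_of_aemeasurable (aemeasurable_quantile μ) measurableSet_Iic,
    measure_congr hpreimage, volume_restrict_Ioo_Iic (cdf_le_one μ x), sub_zero, ofReal_cdf]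

variable [IsProbabilityMeasure ν]

lemma isCoupling_comonotoneCoupling : IsCoupling (comonotoneCoupling μ ν) μ ν := by
  have hmeas := (aemeasurable_quantile μ).prodMk (aemeasurable_quantile ν)
  constructor
  · rw [comonotoneCoupling, AEMeasurable.map_map_of_aemeasurable measurable_fst.aemeasurable hmeas]
    exact map_quantile μ
  · rw [comonotoneCoupling, AEMeasurable.map_map_of_aemeasurable measurable_snd.aemeasurable hmeas]
    exact map_quantile ν

lemma comonotoneCoupling_Iic_prod_Iic (x y : ℝ) :
    comonotoneCoupling μ ν (Iic x ×ˢ Iic y) = min (μ (Iic x)) (ν (Iic y)) := by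
  have hpreimage : (fun u => (quantile μ u, quantile ν u)) ⁻¹' (Iic x ×ˢ Iic y)
      =ᵐ[volume.restrict (Ioo 0 1)] Iic (min (cdf μ x) (cdf ν y)) :=
    ae_restrict_of_forall_mem measurableSet_Ioo fun u hu => propext <|
      (and_congr (quantile_le_iff μ hu x) (quantile_le_iff ν hu y)).trans le_min_iff.symm
  rw [comonotoneCoupling, Measure.map_apply_of_aemeasurable
      ((aemeasurable_quantile μ).prodMk (aemeasurable_quantile ν))
      (measurableSet_Iic.prod measurableSet_Iic),
    measure_congr hpreimage, volume_restrict_Ioo_Iic (min_le_of_left_le (cdf_le_one μ x)), sub_zero,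
    ENNReal.ofReal_mono.map_min, ofReal_cdf, ofReal_cdf]

end Comonotone

theorem comonotone_coupling_minimizes_general {φ : ℝ → ℝ} (hφ : ConvexOn ℝ univ φ)
    (hφ₀ : ∀ t, 0 ≤ φ t) (μ ν : Measure ℝ) [IsProbabilityMeasure μ] [IsProbabilityMeasure ν] :
    (∃! πM : Measure (ℝ × ℝ), IsProbabilityMeasure πM ∧
        ∀ x y : ℝ, πM (Iic x ×ˢ Iic y) = min (μ (Iic x)) (ν (Iic y))) ∧
      ∀ πM : Measure (ℝ × ℝ),
        (IsProbabilityMeasure πM ∧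
          ∀ x y : ℝ, πM (Iic x ×ˢ Iic y) = min (μ (Iic x)) (ν (Iic y))) →
        IsCoupling πM μ ν ∧
          (∀ π : Measure (ℝ × ℝ), IsCoupling π μ ν →
            ∫⁻ z, ENNReal.ofReal (φ (z.2 - z.1)) ∂πM ≤
              ∫⁻ z, ENNReal.ofReal (φ (z.2 - z.1)) ∂π) ∧
          ⨅ π ∈ {π : Measure (ℝ × ℝ) | IsCoupling π μ ν},
            ∫⁻ z, ENNReal.ofReal (φ (z.2 - z.1)) ∂π =
              ∫⁻ z, ENNReal.ofReal (φ (z.2 - z.1)) ∂πM := by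
  have hcoupling := isCoupling_comonotoneCoupling μ ν
  have hcdf := comonotoneCoupling_Iic_prod_Iic μ ν
  have hunique (π : Measure (ℝ × ℝ)) (hπ : IsProbabilityMeasure π ∧
      ∀ x y : ℝ, π (Iic x ×ˢ Iic y) = min (μ (Iic x)) (ν (Iic y))) :
      π = comonotoneCoupling μ ν :=
    have := hπ.1
    ext_of_Iic_prod_Iic fun x y => (hπ.2 x y).trans (hcdf x y).symm
  refine ⟨⟨_, ⟨hcoupling.isProbabilityMeasure, hcdf⟩, hunique⟩, fun πM hπM => ?_⟩
  obtain rfl := hunique πM hπM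
  have hmin (π : Measure (ℝ × ℝ)) (hπ : IsCoupling π μ ν) :=
    hcoupling.lintegral_convexOn_le hπ (fun x y =>
      (hπ.measure_prod_le_min measurableSet_Iic measurableSet_Iic).trans_eq (hcdf x y).symm) hφ hφ₀
  exact ⟨hcoupling, hmin, le_antisymm (iInf₂_le (comonotoneCoupling μ ν) hcoupling) (le_iInf₂ hmin)⟩

/-- for `p > 1`, among all couplings of `μ` and `ν` the integral
`∫ |y-x|^p dπ` is minimized by the (unique) probability measure `π_M` on `ℝ²`
whose joint distribution function is `min {F(x), G(y)}`, and
`W_p(μ,ν)^p = ∫ |y-x|^p dπ_M`. -/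
theorem comonotone_coupling_minimizes (p : ℝ) (hp : 1 < p)
    (μ ν : MeasureTheory.Measure ℝ) [IsProbabilityMeasure μ] [IsProbabilityMeasure ν]
    (hμ : ∫⁻ x, ENNReal.ofReal (|x| ^ p) ∂μ ≠ ⊤)
    (hν : ∫⁻ x, ENNReal.ofReal (|x| ^ p) ∂ν ≠ ⊤) :
    (∃! πM : MeasureTheory.Measure (ℝ × ℝ), IsProbabilityMeasure πM ∧
        ∀ x y : ℝ, πM (Iic x ×ˢ Iic y) = min (μ (Iic x)) (ν (Iic y))) ∧
      ∀ πM : MeasureTheory.Measure (ℝ × ℝ),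
        (IsProbabilityMeasure πM ∧
          ∀ x y : ℝ, πM (Iic x ×ˢ Iic y) = min (μ (Iic x)) (ν (Iic y))) →
        IsCoupling πM μ ν ∧
          (∀ π : MeasureTheory.Measure (ℝ × ℝ), IsCoupling π μ ν →
            ∫⁻ z, ENNReal.ofReal (|z.2 - z.1| ^ p) ∂πM
              ≤ ∫⁻ z, ENNReal.ofReal (|z.2 - z.1| ^ p) ∂π) ∧
          WpPow p μ ν = ∫⁻ z, ENNReal.ofReal (|z.2 - z.1| ^ p) ∂πM := by
  simpa only [WpPow, abs_sub_comm] using comonotone_coupling_minimizes_general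
    (convexOn_abs_rpow hp.le) (fun t => Real.rpow_nonneg (abs_nonneg t) p) μ ν
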